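/- arXiv:1111.0627 — 3 statements merged into one kernel-verified Lean document; each statement's English description precedes it below -/
import Mathlib

section
/- Let G = (V, E) be a finite directed graph with weight function w : E → ℝ, and assume G contains at least one cycle. Then the minimal cycle mean μ* is the maximum of the set { r ∈ ℝ : G contains no cycle of negative total weight with respect to the parametric weight function w_r }; that is, this set equals the interval (−∞, μ*] and its maximum is attained at μ*. -/
variable {V : Type*}

/-- A cycle of length `k + 1` in the directed graph with edge relation `E`:
the vertices are `f 0, f 1, ..., f k, f 0` with indices taken cyclically. -/
def IsCycle (E : V → V → Prop) {k : ℕ} (f : Fin (k + 1) → V) : Prop :=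
  ∀ i : Fin (k + 1), E (f i) (f (i + 1))

/-- Total weight of a cycle with respect to the weight function `w`. -/
noncomputable def cycleWeight (w : V → V → ℝ) {k : ℕ} (f : Fin (k + 1) → V) : ℝ :=
  ∑ i : Fin (k + 1), w (f i) (f (i + 1))

/-- The cycle mean: total weight divided by the length `k + 1`. -/
noncomputable def cycleMean (w : V → V → ℝ) {k : ℕ} (f : Fin (k + 1) → V) : ℝ :=
  cycleWeight w f / (k + 1 : ℝ)

/-- `mu` is the minimal cycle mean of the graph: it is attained by some cycle and
it is a lower bound on the mean of every cycle. -/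
def IsMinCycleMean (E : V → V → Prop) (w : V → V → ℝ) (mu : ℝ) : Prop :=
  (∃ (k : ℕ) (f : Fin (k + 1) → V), IsCycle E f ∧ cycleMean w f = mu) ∧
  ∀ (k : ℕ) (f : Fin (k + 1) → V), IsCycle E f → mu ≤ cycleMean w f

/-- The set of real numbers `r` for which the graph has no cycle of negative
total weight with respect to the parametric weight function `w_r = w - r`. -/
def FeasibleSet (E : V → V → Prop) (w : V → V → ℝ) : Set ℝ :=
  {r : ℝ | ∀ (k : ℕ) (f : Fin (k + 1) → V), IsCycle E f →
    0 ≤ cycleWeight (fun u v => w u v - r) f}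

/-- The set of feasible parameters equals the interval `(-∞, μ*]`, and its
maximum is attained at the minimal cycle mean `μ*`. -/
theorem feasibleSet_eq_Iic_minCycleMean [Fintype V] (E : V → V → Prop)
    (w : V → V → ℝ) (mu : ℝ) (hmu : IsMinCycleMean E w mu) :
    FeasibleSet E w = Set.Iic mu ∧ IsGreatest (FeasibleSet E w) mu := by
  have key : ∀ (r : ℝ) (k : ℕ) (f : Fin (k + 1) → V),
      0 ≤ cycleWeight (fun u v => w u v - r) f ↔ r ≤ cycleMean w f := by
    intro r k f
    have hk : (0 : ℝ) < (k : ℝ) + 1 := by positivity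
    have h : cycleWeight (fun u v => w u v - r) f = cycleWeight w f - r * ((k : ℝ) + 1) := by
      simp only [cycleWeight, Finset.sum_sub_distrib, Finset.sum_const, Finset.card_univ,
        Fintype.card_fin, nsmul_eq_mul]
      push_cast
      ring
    rw [h, cycleMean, le_div_iff₀ hk, sub_nonneg]
  have hset : FeasibleSet E w = Set.Iic mu := by
    obtain ⟨⟨k₀, f₀, hc₀, hm₀⟩, hmin⟩ := hmu
    ext r
    constructor
    · intro hr
      have h := (key r k₀ f₀).1 (hr k₀ f₀ hc₀)
      rw [hm₀] at h
      exact h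
    · intro hr k f hf
      exact (key r k f).2 (le_trans hr (hmin k f hf))
  refine ⟨hset, ?_⟩
  rw [hset]
  exact isGreatest_Iic
end

section
/- Let G = (V, E) be a finite strongly connected directed graph with at least one edge and weight function w : E → ℝ, and let μ* be its minimal cycle mean. Then for every real number r, there exists a potential function d : V → ℝ satisfying d(v) ≤ d(u) + w((u,v)) − r for every edge (u,v) ∈ E if and only if r ≤ μ*. Hence μ* is the optimal value of the linear program: maximize r subject to d(v) ≤ d(u) + w((u,v)) − r for all edges (u,v). -/
variable {V : Type*}

/-- Walks with length and total weight. -/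
inductive WWalk (E : V → V → Prop) (w : V → V → ℝ) (s : V) : ℕ → V → ℝ → Prop
  | nil : WWalk E w s 0 s 0
  | snoc {n : ℕ} {u v : V} {x : ℝ} (h : WWalk E w s n u x) (e : E u v) :
      WWalk E w s (n + 1) v (x + w u v)

theorem WWalk.append {E : V → V → Prop} {w : V → V → ℝ} {s t v : V} {n m : ℕ} {x y : ℝ}
    (h : WWalk E w s n t x) (h2 : WWalk E w t m v y) : WWalk E w s (n + m) v (x + y) := by
  induction h2 with
  | nil => simpa using h
  | snoc h' e ih =>
    rw [← add_assoc, ← add_assoc]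
    exact ih.snoc e

theorem WWalk.exists_fun {E : V → V → Prop} {w : V → V → ℝ} {s v : V} {n : ℕ} {x : ℝ}
    (h : WWalk E w s n v x) : ∃ p : ℕ → V, p 0 = s ∧ p n = v ∧
      (∀ i < n, E (p i) (p (i + 1))) ∧ x = ∑ i ∈ Finset.range n, w (p i) (p (i + 1)) := by
  induction h with
  | nil => exact ⟨fun _ => s, rfl, rfl, by simp, by simp⟩
  | @snoc n u v x h e ih =>
    obtain ⟨p, h0, hn, hE, hx⟩ := ih
    refine ⟨fun i => if i ≤ n then p i else v, by simpa using h0, by simp, ?_, ?_⟩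
    · intro i hi
      rcases Nat.lt_succ_iff_lt_or_eq.mp hi with hlt | rfl
      · have h1 : i ≤ n := hlt.le
        have h2 : i + 1 ≤ n := hlt
        simpa [h1, h2] using hE i hlt
      · simpa [hn] using e
    · rw [Finset.sum_range_succ, hx]
      congr 1
      · refine Finset.sum_congr rfl fun i hi => ?_
        have hlt := Finset.mem_range.mp hi
        have h1 : i ≤ n := hlt.le
        have h2 : i + 1 ≤ n := hlt
        simp [h1, h2]
      · simp [hn]

theorem WWalk.exists_of_transGen {E : V → V → Prop} (w : V → V → ℝ) {s v : V}
    (h : Relation.TransGen E s v) : ∃ n x, WWalk E w s n v x := by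
  induction h with
  | single e => exact ⟨_, _, WWalk.nil.snoc e⟩
  | tail _ e ih =>
    obtain ⟨n, x, h⟩ := ih
    exact ⟨_, _, h.snoc e⟩

theorem WWalk.closed_ge {E : V → V → Prop} {w : V → V → ℝ} {mu : ℝ}
    (hmu : ∀ (k : ℕ) (f : Fin (k + 1) → V), IsCycle E f → mu ≤ cycleMean w f)
    {s : V} {n : ℕ} {x : ℝ} (h : WWalk E w s n s x) : mu * n ≤ x := by
  obtain ⟨p, h0, hn, hE, hx⟩ := h.exists_fun
  rcases n with _ | k
  · simp [hx]
  have key : ∀ i : Fin (k + 1), p ((i + 1 : Fin (k + 1)) : ℕ) = p ((i : ℕ) + 1) := by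
    intro i
    rw [Fin.val_add_one]
    split_ifs with hi
    · subst hi
      simp [h0, hn]
    · rfl
  have hc := hmu k (fun i => p i) (fun i => by
    simp only [key]
    exact hE i i.2)
  have hk : (0 : ℝ) < (k : ℝ) + 1 := by positivity
  rw [cycleMean, le_div_iff₀ hk, cycleWeight] at hc
  simp only [key] at hc
  rw [Fin.sum_univ_eq_sum_range (fun i => w (p i) (p (i + 1))) (k + 1), ← hx] at hc
  push_cast
  exact hc

/-- In a finite strongly connected graph with at least one edge, a potential
function `d` with `d v ≤ d u + w (u,v) - r` for every edge exists if and only if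
`r ≤ μ*`; hence `μ*` is the optimal value of the corresponding linear program. -/
theorem exists_potential_iff_le_minCycleMean [Fintype V] (E : V → V → Prop)
    (w : V → V → ℝ)
    (hsc : ∀ u v : V, u ≠ v → Relation.TransGen E u v)
    (hedge : ∃ u v : V, E u v)
    (mu : ℝ) (hmu : IsMinCycleMean E w mu) :
    ∀ r : ℝ,
      (∃ d : V → ℝ, ∀ u v : V, E u v → d v ≤ d u + w u v - r) ↔ r ≤ mu := by
  intro r
  constructor
  · rintro ⟨d, hd⟩
    obtain ⟨⟨k, f, hf, rfl⟩, -⟩ := hmu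
    have hk : (0 : ℝ) < (k : ℝ) + 1 := by positivity
    rw [cycleMean, le_div_iff₀ hk, cycleWeight]
    have h1 : ∑ i : Fin (k + 1), d (f (i + 1)) = ∑ i : Fin (k + 1), d (f i) :=
      Equiv.sum_comp (Equiv.addRight (1 : Fin (k + 1))) (fun i => d (f i))
    have h2 := Finset.sum_le_sum (fun i (_ : i ∈ Finset.univ) => hd _ _ (hf i))
    rw [Finset.sum_sub_distrib, Finset.sum_add_distrib, h1] at h2
    simp only [Finset.sum_const, Finset.card_univ, Fintype.card_fin, nsmul_eq_mul] at h2
    push_cast at h2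
    linarith
  · intro hr
    obtain ⟨s, _, _⟩ := hedge
    have hex : ∀ u v : V, ∃ n x, WWalk E w u n v x := by
      intro u v
      by_cases huv : u = v
      · subst huv
        exact ⟨_, _, WWalk.nil⟩
      · exact WWalk.exists_of_transGen w (hsc u v huv)
    let S : V → Set ℝ := fun v => {y | ∃ n x, WWalk E w s n v x ∧ y = x - r * n}
    have hne : ∀ v, (S v).Nonempty := by
      intro v
      obtain ⟨n, x, h⟩ := hex s v
      exact ⟨_, n, x, h, rfl⟩
    have hbd : ∀ v, BddBelow (S v) := by
      intro v
      obtain ⟨m, z, h⟩ := hex v s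
      refine ⟨r * m - z, ?_⟩
      rintro y ⟨n, x, hw, rfl⟩
      have h3 := WWalk.closed_ge hmu.2 (hw.append h)
      have h4 : r * ((n + m : ℕ) : ℝ) ≤ mu * ((n + m : ℕ) : ℝ) :=
        mul_le_mul_of_nonneg_right hr (Nat.cast_nonneg _)
      have h5 := h4.trans h3
      push_cast at h5
      linarith
    refine ⟨fun v => sInf (S v), fun u v e => ?_⟩
    have h6 : sInf (S v) - w u v + r ≤ sInf (S u) := by
      refine le_csInf (hne u) ?_
      rintro y ⟨n, x, hw, rfl⟩
      have h7 : sInf (S v) ≤ (x + w u v) - r * ((n + 1 : ℕ) : ℝ) :=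
        csInf_le (hbd v) ⟨_, _, hw.snoc e, rfl⟩
      push_cast at h7
      linarith
    show sInf (S v) ≤ sInf (S u) + w u v - r
    linarith
end

section
/- Let G = (V, E) be a finite directed graph on vertices v_0, …, v_{n−1} (n ≥ 2) with weight function w : E → ℝ, and assume G contains at least one cycle. Form the graph G_H obtained from G by adding the Hamiltonian cycle edges (v_0,v_1), (v_1,v_2), …, (v_{n−2},v_{n−1}), (v_{n−1},v_0) (where edges already present keep their original weight and new edges all receive a common weight M). Then G_H is strongly connected for every choice of M, and there exists M_0 ∈ ℝ such that for all M ≥ M_0, the minimal cycle mean of G_H equals the minimal cycle mean of G. -/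
variable {V : Type*}

open Fin.CommRing in
lemma aux_reach {m : ℕ} (E : Fin (m + 2) → Fin (m + 2) → Prop) (u v : Fin (m + 2)) :
    Relation.ReflTransGen (fun a b : Fin (m + 2) => E a b ∨ b = a + 1) u v := by
  have h : ∀ k : ℕ, Relation.ReflTransGen
      (fun a b : Fin (m + 2) => E a b ∨ b = a + 1) u (u + (k : Fin (m + 2))) := by
    intro k
    induction k with
    | zero => simpa using Relation.ReflTransGen.refl
    | succ k ih => exact ih.tail (Or.inr (by push_cast; rw [add_assoc]))
  have h2 := h (v - u).val
  rw [Fin.cast_val_eq_self, add_sub_cancel] at h2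
  exact h2

lemma aux_cycle_nonneg {E : V → V → Prop} {w : V → V → ℝ} {mu : ℝ}
    (hmu : IsMinCycleMean E w mu) (f : ℕ → V) (i k : ℕ)
    (hf : ∀ t, t < k + 1 → E (f (i + t)) (f (i + t + 1))) (hc : f (i + (k + 1)) = f i) :
    0 ≤ ∑ t ∈ Finset.range (k + 1), (w (f (i + t)) (f (i + t + 1)) - mu) := by
  have key : ∀ t : Fin (k + 1), f (i + (t + 1 : Fin (k + 1)).val) = f (i + t.val + 1) := by
    intro t
    rcases eq_or_ne t (Fin.last k) with rfl | h
    · rw [Fin.last_add_one]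
      simp only [Fin.val_zero, Fin.val_last, add_zero]
      rw [← hc]; rfl
    · rw [Fin.val_add_one_of_lt (Fin.lt_last_iff_ne_last.2 h)]; rfl
  have h := hmu.2 k (fun t => f (i + t.val)) (by
    intro t
    show E (f (i + t.val)) (f (i + (t + 1 : Fin (k + 1)).val))
    rw [key]
    exact hf t.val t.isLt)
  unfold cycleMean cycleWeight at h
  simp only [key] at h
  rw [le_div_iff₀ (by positivity)] at h
  rw [Fin.sum_univ_eq_sum_range (fun t => w (f (i + t)) (f (i + t + 1))) (k + 1)] at h
  rw [Finset.sum_sub_distrib]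
  simp only [Finset.sum_const, Finset.card_range, nsmul_eq_mul]
  push_cast
  linarith

lemma aux_bound [Fintype V] {E : V → V → Prop} {w : V → V → ℝ} {mu : ℝ}
    (hmu : IsMinCycleMean E w mu) (C : ℝ) (hC0 : 0 ≤ C) (hC : ∀ a b, -C ≤ w a b - mu) :
    ∀ (L : ℕ) (f : ℕ → V), (∀ t, t < L → E (f t) (f (t + 1))) →
      -(Fintype.card V * C) ≤ ∑ t ∈ Finset.range L, (w (f t) (f (t + 1)) - mu) := by
  intro L
  induction L using Nat.strong_induction_on with
  | _ L ih =>
    intro f hf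
    rcases le_or_gt L (Fintype.card V) with hL | hL
    · have h1 : ∑ t ∈ Finset.range L, (-C) ≤ ∑ t ∈ Finset.range L, (w (f t) (f (t + 1)) - mu) :=
        Finset.sum_le_sum fun t _ => hC _ _
      have h2 : (L : ℝ) * C ≤ Fintype.card V * C :=
        mul_le_mul_of_nonneg_right (by exact_mod_cast hL) hC0
      simp only [Finset.sum_const, Finset.card_range, nsmul_eq_mul] at h1
      linarith
    · obtain ⟨x, y, hxy, hfxy⟩ := Fintype.exists_ne_map_eq_of_card_lt
        (fun t : Fin L => f t.val) (by simpa using hL)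
      obtain ⟨i, j, hij, hj, hfe⟩ : ∃ i j : ℕ, i < j ∧ j < L ∧ f i = f j := by
        rcases lt_or_gt_of_ne hxy with h | h
        · exact ⟨x, y, h, y.isLt, hfxy⟩
        · exact ⟨y, x, h, x.isLt, hfxy.symm⟩
      obtain ⟨k, rfl⟩ : ∃ k, j = i + (k + 1) := ⟨j - i - 1, by omega⟩
      obtain ⟨r, rfl⟩ : ∃ r, L = i + (k + 1) + r := ⟨L - (i + (k + 1)), by omega⟩
      have hcyc := aux_cycle_nonneg hmu f i k (fun t ht => hf _ (by omega)) hfe.symm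
      let g : ℕ → V := fun t => if t ≤ i then f t else f (t + (k + 1))
      have g1 : ∀ t, t ≤ i → g t = f t := fun t ht => if_pos ht
      have g2 : ∀ t, g (i + t) = f (i + (k + 1) + t) := by
        intro t
        rcases Nat.eq_zero_or_pos t with rfl | h
        · simp only [add_zero]; rw [g1 _ le_rfl]; exact hfe
        · have : ¬ (i + t ≤ i) := by omega
          simp only [g, if_neg this]
          congr 1; omega
      have hg := ih (i + r) (by omega) g (by
        intro t ht
        rcases lt_or_ge t i with h | h
        · rw [g1 t h.le, g1 (t + 1) h]; exact hf _ (by omega)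
        · obtain ⟨s, rfl⟩ := Nat.exists_eq_add_of_le h
          rw [g2, add_assoc i s 1, g2]; exact hf _ (by omega))
      rw [Finset.sum_range_add] at hg
      rw [Finset.sum_range_add, Finset.sum_range_add]
      have e1 : ∑ t ∈ Finset.range i, (w (g t) (g (t + 1)) - mu)
          = ∑ t ∈ Finset.range i, (w (f t) (f (t + 1)) - mu) := by
        refine Finset.sum_congr rfl fun t ht => ?_
        have := Finset.mem_range.1 ht
        rw [g1 t this.le, g1 (t + 1) this]
      have e2 : ∑ t ∈ Finset.range r, (w (g (i + t)) (g (i + t + 1)) - mu)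
          = ∑ t ∈ Finset.range r,
            (w (f (i + (k + 1) + t)) (f (i + (k + 1) + t + 1)) - mu) := by
        refine Finset.sum_congr rfl fun t _ => ?_
        rw [g2, add_assoc i t 1, g2]; rfl
      rw [e1, e2] at hg
      linarith

lemma aux_potential [Fintype V] {E : V → V → Prop} {w : V → V → ℝ} {mu : ℝ}
    (hmu : IsMinCycleMean E w mu) :
    ∃ p : V → ℝ, ∀ a b, E a b → 0 ≤ w a b - mu - p a + p b := by
  obtain ⟨C, hC⟩ := (Set.finite_range fun x : V × V => -(w x.1 x.2 - mu)).bddAbove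
  have hC' : ∀ a b, -(max C 0) ≤ w a b - mu := by
    intro a b
    have := hC ⟨(a, b), rfl⟩
    have h2 := le_max_left C 0
    simp only at this
    linarith
  have hB := aux_bound hmu (max C 0) (le_max_right _ _) hC'
  let S : V → Set ℝ := fun v => {r | ∃ (L : ℕ) (f : ℕ → V), f 0 = v ∧
    (∀ t, t < L → E (f t) (f (t + 1))) ∧
    r = ∑ t ∈ Finset.range L, (w (f t) (f (t + 1)) - mu)}
  have hbdd : ∀ v, BddBelow (S v) := by
    intro v
    refine ⟨-(Fintype.card V * max C 0), ?_⟩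
    · rintro r ⟨L, f, -, hf, rfl⟩
      exact hB L f hf
  have hne : ∀ v, (S v).Nonempty := fun v =>
    ⟨0, 0, fun _ => v, rfl, fun t ht => absurd ht (by omega), by simp⟩
  refine ⟨fun v => sInf (S v), fun a b hab => ?_⟩
  have : sInf (S a) - (w a b - mu) ≤ sInf (S b) := by
    refine le_csInf (hne b) ?_
    rintro r ⟨L, f, hf0, hf, rfl⟩
    have hm : sInf (S a) ≤ (∑ t ∈ Finset.range L, (w (f t) (f (t + 1)) - mu)) + (w a b - mu) := by
      refine csInf_le (hbdd a) ⟨L + 1, fun t => Nat.casesOn t a f, rfl, ?_, ?_⟩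
      · intro t ht
        cases t with
        | zero => simpa [hf0] using hab
        | succ t => exact hf t (by omega)
      · rw [Finset.sum_range_succ']
        simp [hf0]
    linarith
  simp only
  linarith

/-- Adding a Hamiltonian cycle `v_0 → v_1 → ⋯ → v_{n-1} → v_0` (new edges of
common weight `M`, existing edges keeping their weight) to a finite graph on
`n = m + 2 ≥ 2` vertices yields a strongly connected graph, and for all
sufficiently large `M` the minimal cycle mean is unchanged. -/
theorem hamiltonian_augmentation (m : ℕ) (E : Fin (m + 2) → Fin (m + 2) → Prop)
    [DecidableRel E] (w : Fin (m + 2) → Fin (m + 2) → ℝ) (mu : ℝ)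
    (hmu : IsMinCycleMean E w mu) :
    (∀ u v : Fin (m + 2), u ≠ v →
      Relation.TransGen (fun a b : Fin (m + 2) => E a b ∨ b = a + 1) u v) ∧
    (∃ M0 : ℝ, ∀ M : ℝ, M0 ≤ M →
      IsMinCycleMean (fun a b : Fin (m + 2) => E a b ∨ b = a + 1)
        (fun a b => if E a b then w a b else M) mu) := by
  constructor
  · intro u v huv
    have h2 := aux_reach E u v
    rcases Relation.reflTransGen_iff_eq_or_transGen.1 h2 with h3 | h3
    · exact absurd h3.symm huv
    · exact h3
  · obtain ⟨p, hp⟩ := aux_potential hmu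
    obtain ⟨M0, hM0⟩ := (Set.finite_range
      fun x : Fin (m + 2) × Fin (m + 2) => mu + p x.1 - p x.2).bddAbove
    refine ⟨M0, fun M hM => ⟨?_, ?_⟩⟩
    · obtain ⟨k, f, hf, hfm⟩ := hmu.1
      refine ⟨k, f, fun i => Or.inl (hf i), ?_⟩
      rw [← hfm]
      unfold cycleMean cycleWeight
      congr 1
      exact Finset.sum_congr rfl fun i _ => if_pos (hf i)
    · intro k f _
      unfold cycleMean cycleWeight
      rw [le_div_iff₀ (by positivity)]
      have hs : ∑ i : Fin (k + 1), p (f (i + 1)) = ∑ i : Fin (k + 1), p (f i) :=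
        Equiv.sum_comp (Equiv.addRight (1 : Fin (k + 1))) (fun i => p (f i))
      have h0 : ∑ i : Fin (k + 1), (mu + p (f i) - p (f (i + 1))) ≤
          ∑ i : Fin (k + 1), (if E (f i) (f (i + 1)) then w (f i) (f (i + 1)) else M) := by
        refine Finset.sum_le_sum fun i _ => ?_
        split_ifs with h
        · linarith [hp _ _ h]
        · exact (hM0 ⟨(f i, f (i + 1)), rfl⟩).trans hM
      rw [Finset.sum_sub_distrib, Finset.sum_add_distrib, hs] at h0
      simp only [Finset.sum_const, Finset.card_univ, Fintype.card_fin, nsmul_eq_mul] at h0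
      push_cast at h0
      linarith
end
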